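/- arXiv:1907.07926 — 3 statements merged into one kernel-verified Lean document; each statement's English description precedes it below -/
import Mathlib

section
/- Let 2 < p ≤ 6, 2 < q ≤ 4 and ω > 0. Then there exists exactly one function u : ℝ → ℝ with the following properties: u ∈ H¹(ℝ); u(x) > 0 for all x ∈ ℝ; u is twice continuously differentiable on ℝ ∖ {0} and satisfies u''(x) + u(x)^{p−1} = ω·u(x) for every x ≠ 0; the one-sided derivatives u'(0⁻) and u'(0⁺) exist; and u'(0⁻) − u'(0⁺) = u(0)^{q−1}. -/
open MeasureTheory Real Set

noncomputable section

/-- `u ∈ H¹(ℝ)` with weak derivative `u'`: `u` is continuous, square-integrable,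
`u'` is square-integrable, and `u(b) − u(a) = ∫_a^b u'(t) dt` for all `a ≤ b`. -/
def IsH1 (u u' : ℝ → ℝ) : Prop :=
  Continuous u ∧ Integrable (fun x => (u x) ^ 2) ∧ Integrable (fun x => (u' x) ^ 2) ∧
    ∀ a b : ℝ, a ≤ b → u b - u a = ∫ t in a..b, u' t

/-- The mass `‖u‖₂² = ∫_ℝ u(x)² dx`. -/
def mass (u : ℝ → ℝ) : ℝ := ∫ x, (u x) ^ 2

/-- `D_q(u) = (1/2)∫ u'² − (1/q)|u(0)|^q`. -/
def Dfun (q : ℝ) (u u' : ℝ → ℝ) : ℝ :=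
  (1 / 2) * (∫ x, (u' x) ^ 2) - (1 / q) * |u 0| ^ q

/-- `F_{p,q}(u) = (1/2)∫ u'² − (1/p)∫ |u|^p − (1/q)|u(0)|^q`. -/
def Ffun (p q : ℝ) (u u' : ℝ → ℝ) : ℝ :=
  (1 / 2) * (∫ x, (u' x) ^ 2) - (1 / p) * (∫ x, |u x| ^ p) - (1 / q) * |u 0| ^ q

open Filter Topology

lemma const_Ioi {f f' : ℝ → ℝ} (h : ∀ x > 0, HasDerivAt f (f' x) x) (h0 : ∀ x > 0, f' x = 0) :
    ∀ x > 0, f x = f 1 := by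
  intro x hx
  refine isOpen_Ioi.is_const_of_deriv_eq_zero (s := Ioi (0:ℝ)) isPreconnected_Ioi
    (fun y hy => (h y hy).differentiableAt.differentiableWithinAt) ?_ hx
    (show (1:ℝ) ∈ Ioi 0 by norm_num)
  intro y hy
  simp [(h y hy).deriv, h0 y hy]

lemma energy_zero {p ω : ℝ} (hp : 2 < p) (hω : 0 < ω) {u u1 : ℝ → ℝ}
    (hcont : Continuous u) (hpos : ∀ x, 0 < u x) (hint : Integrable (fun x => (u x) ^ 2))
    (hd : ∀ x > 0, HasDerivAt u (u1 x) x)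
    (hd2 : ∀ x > 0, HasDerivAt u1 (ω * u x - u x ^ (p - 1)) x) :
    ∀ x > 0, u1 x ^ 2 = ω * u x ^ 2 - 2 / p * u x ^ p := by
  have hE : ∀ x > 0, u1 x ^ 2 - ω * u x ^ 2 + 2 / p * u x ^ p
      = u1 1 ^ 2 - ω * u 1 ^ 2 + 2 / p * u 1 ^ p := by
    refine const_Ioi (f := fun x => u1 x ^ 2 - ω * u x ^ 2 + 2 / p * u x ^ p) (f' := fun x =>
      2 * u1 x * (ω * u x - u x ^ (p - 1)) - ω * (2 * u x * u1 x)
        + 2 / p * (u1 x * p * u x ^ (p - 1))) ?_ ?_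
    · intro x hx
      have h1 := (hd2 x hx).pow 2
      have h2 := ((hd x hx).pow 2).const_mul ω
      have h3 := ((hd x hx).rpow_const (p := p) (Or.inl (hpos x).ne')).const_mul (2 / p)
      refine HasDerivAt.congr_deriv ((h1.sub h2).add h3) ?_
      simp
    · intro x hx
      have : p ≠ 0 := by linarith
      field_simp
      ring
  set E := u1 1 ^ 2 - ω * u 1 ^ 2 + 2 / p * u 1 ^ p with hEdef
  have hp0 : 0 < p := by linarith
  -- boundedness
  obtain ⟨M, hM⟩ : ∃ M, ∀ x > 0, u x ≤ M := by
    refine ⟨max 1 ((p * (|E| + ω) / 2) ^ (1 / (p - 2))), fun x hx => ?_⟩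
    by_cases h1 : u x ≤ 1
    · exact h1.trans (le_max_left _ _)
    · refine le_trans ?_ (le_max_right _ _)
      push Not at h1
      have e1 := hE x hx
      have e2 : u x ^ p = u x ^ (p - 2) * u x ^ 2 := by
        rw [← rpow_natCast, ← rpow_add (hpos x)]; norm_num
      have e3 : 2 / p * u x ^ (p - 2) ≤ |E| + ω := by
        have h2 : (1:ℝ) ≤ u x ^ 2 := by nlinarith
        have h3 : 2 / p * u x ^ (p - 2) * u x ^ 2 ≤ (|E| + ω) * u x ^ 2 := by
          have : |E| * 1 ≤ |E| * u x ^ 2 := by gcongr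
          rw [e2] at e1
          nlinarith [le_abs_self E, sq_nonneg (u1 x)]
        exact le_of_mul_le_mul_right h3 (by positivity)
      have e4 : u x ^ (p - 2) ≤ p * (|E| + ω) / 2 := by
        rw [div_mul_eq_mul_div, div_le_iff₀ hp0] at e3
        linarith
      calc u x = (u x ^ (p - 2)) ^ (1 / (p - 2)) := by
            rw [← rpow_mul (hpos x).le, mul_one_div_cancel (by linarith), rpow_one]
        _ ≤ _ := by
            apply rpow_le_rpow (rpow_nonneg (hpos x).le _) e4
            have : 0 < p - 2 := by linarith
            positivity
  have hM0 : 0 < M := (hpos 1).trans_le (hM 1 one_pos)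
  -- derivative bounded
  have hC : ∀ x > 0, |u1 x| ≤ √(|E| + ω * M ^ 2) := by
    intro x hx
    apply abs_le_sqrt
    have e1 := hE x hx
    have : 0 ≤ 2 / p * u x ^ p := by have := hpos x; positivity
    have : u x ^ 2 ≤ M ^ 2 := by have := hM x hx; have := (hpos x).le; gcongr
    nlinarith [le_abs_self E]
  set C := √(|E| + ω * M ^ 2)
  have hlim3 : Tendsto (fun x => u x ^ 3) atTop (𝓝 0) := by
    refine tendsto_zero_of_hasDerivAt_of_integrableOn_Ioi (a := 0)
      (f' := fun x => 3 * u x ^ 2 * u1 x) ?_ ?_ ?_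
    · intro x hx
      exact ((hd x hx).pow 3).congr_deriv (by simp)
    · refine Integrable.mono' (g := fun x => 3 * C * u x ^ 2) ((hint.const_mul _).integrableOn) ?_ ?_
      · apply ContinuousOn.aestronglyMeasurable _ measurableSet_Ioi
        apply ContinuousOn.mul (by fun_prop)
        exact fun x hx => (hd2 x hx).continuousAt.continuousWithinAt
      · rw [ae_restrict_iff' measurableSet_Ioi]
        refine Eventually.of_forall fun x hx => ?_
        rw [norm_mul, Real.norm_eq_abs, Real.norm_eq_abs, abs_of_nonneg (by positivity)]
        have := hC x hx
        calc 3 * u x ^ 2 * |u1 x| ≤ 3 * u x ^ 2 * C := by gcongr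
          _ = _ := by ring
    · refine Integrable.mono' (g := fun x => M * u x ^ 2) ((hint.const_mul _).integrableOn) ?_ ?_
      · exact (hcont.pow 3).aestronglyMeasurable
      · rw [ae_restrict_iff' measurableSet_Ioi]
        refine Eventually.of_forall fun x hx => ?_
        have h0 := hpos x
        rw [Real.norm_eq_abs, abs_of_nonneg (by positivity)]
        have := hM x hx
        calc u x ^ 3 = u x * u x ^ 2 := by ring
          _ ≤ _ := by gcongr
  have hlim : Tendsto u atTop (𝓝 0) := by
    have := hlim3.rpow_const (p := 1 / 3) (Or.inr (by norm_num))
    rw [zero_rpow (by norm_num)] at this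
    refine this.congr fun x => ?_
    rw [← rpow_natCast, ← rpow_mul (hpos x).le]; norm_num
  have hlimE : Tendsto (fun x => u1 x ^ 2) atTop (𝓝 E) := by
    have h1 : Tendsto (fun x => E + ω * u x ^ 2 - 2 / p * u x ^ p) atTop
        (𝓝 (E + ω * 0 ^ 2 - 2 / p * 0 ^ p)) :=
      ((hlim.pow 2).const_mul ω |>.const_add E).sub
        ((hlim.rpow_const (p := p) (Or.inr hp0.le)).const_mul (2 / p))
    rw [zero_rpow hp0.ne'] at h1
    simp only [ne_eq, OfNat.ofNat_ne_zero, not_false_eq_true, zero_pow, mul_zero, add_zero,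
      sub_zero] at h1
    refine h1.congr' ?_
    filter_upwards [eventually_gt_atTop 0] with x hx
    linarith [hE x hx]
  have hmv : ∀ n : ℕ, ∃ ξ : ℝ, (n:ℝ) + 1 < ξ ∧ u1 ξ = u ((n:ℝ) + 2) - u ((n:ℝ) + 1) := by
    intro n
    have hn : (0:ℝ) ≤ n := n.cast_nonneg
    obtain ⟨ξ, h1, h2⟩ := exists_hasDerivAt_eq_slope u u1 (a := (n:ℝ) + 1) (b := (n:ℝ) + 2)
      (by linarith) hcont.continuousOn (fun x hx => hd x (by linarith [hx.1]))
    refine ⟨ξ, h1.1, ?_⟩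
    rw [h2]
    have : (n:ℝ) + 2 - (n + 1) = 1 := by ring
    rw [this, div_one]
  choose ξ hξ1 hξ2 using hmv
  have hξ : Tendsto ξ atTop atTop :=
    tendsto_atTop_mono (fun n => (by linarith [hξ1 n] : (n:ℝ) ≤ ξ n)) tendsto_natCast_atTop_atTop
  have t1 := hlimE.comp hξ
  have t2 : Tendsto ((fun x => u1 x ^ 2) ∘ ξ) atTop (𝓝 ((0 - 0) ^ 2)) := by
    have a1 := hlim.comp (tendsto_atTop_add_const_right atTop (2:ℝ) tendsto_natCast_atTop_atTop)
    have a2 := hlim.comp (tendsto_atTop_add_const_right atTop (1:ℝ) tendsto_natCast_atTop_atTop)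
    refine ((a1.sub a2).pow 2).congr fun n => ?_
    simp [hξ2]
  have hE0 := tendsto_nhds_unique t1 t2
  intro x hx
  have := hE x hx
  norm_num at hE0
  linarith

lemma half_line {p ω : ℝ} (hp : 2 < p) (hω : 0 < ω) {u u1 : ℝ → ℝ}
    (hcont : Continuous u) (hpos : ∀ x, 0 < u x) (hint : Integrable (fun x => (u x) ^ 2))
    (hd : ∀ x > 0, HasDerivAt u (u1 x) x)
    (hd2 : ∀ x > 0, HasDerivAt u1 (ω * u x - u x ^ (p - 1)) x) (k α : ℝ)
    (hk : k = (p - 2) / 2) (hα : α = k * √ω) :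
    ∃ A B : ℝ, A * B = 1 / (2 * p * ω) ∧
      ∀ x ≥ 0, u x ^ (-k) = A * exp (α * x) + B * exp (-(α * x)) := by
  have hen := energy_zero hp hω hcont hpos hint hd hd2
  have hk0 : 0 < k := by rw [hk]; linarith
  have hα0 : 0 < α := by rw [hα]; positivity
  have hα2 : α ^ 2 = k ^ 2 * ω := by rw [hα, mul_pow, sq_sqrt hω.le]
  have hpk : p = 2 * k + 2 := by rw [hk]; ring
  set v : ℝ → ℝ := fun x => u x ^ (-k) with hv
  set v1 : ℝ → ℝ := fun x => -k * (u x ^ (-k - 1) * u1 x) with hv1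
  have dv : ∀ x > 0, HasDerivAt v (v1 x) x := by
    intro x hx
    refine HasDerivAt.congr_deriv ((hd x hx).rpow_const (p := -k) (Or.inl (hpos x).ne')) ?_
    simp only [hv1]; ring
  have r1 : ∀ x, u x ^ (-k) = u x ^ (-k - 2) * u x ^ 2 := fun x => by
    rw [← rpow_natCast, ← rpow_add (hpos x)]; norm_num
  have r2 : ∀ x, u x ^ (-k - 1) = u x ^ (-k - 2) * u x := fun x => by
    conv_rhs => rw [← rpow_one (u x), ← rpow_mul (hpos x).le]
    rw [← rpow_add (hpos x)]; congr 1; ring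
  have r3 : ∀ x, u x ^ p = u x ^ (p - 1) * u x := fun x => by
    conv_rhs => rw [← rpow_one (u x), ← rpow_mul (hpos x).le]
    rw [← rpow_add (hpos x)]; congr 1; ring
  have dv1 : ∀ x > 0, HasDerivAt v1 (α ^ 2 * v x) x := by
    intro x hx
    have h1 := (hd x hx).rpow_const (p := -k - 1) (Or.inl (hpos x).ne')
    refine HasDerivAt.congr_deriv ((h1.mul (hd2 x hx)).const_mul (-k)) ?_
    have e := hen x hx
    have e' : -k - 1 - 1 = -k - 2 := by ring
    simp only [hv]
    rw [e', r1, r2, hα2]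
    rw [r3] at e
    have hx0 := hpos x
    have hp0 : 2 * k + 2 ≠ 0 := by positivity
    have : u1 x * (-k - 1) * u x ^ (-k - 2) * u1 x = (-k-1) * u x ^ (-k-2) * u1 x ^ 2 := by ring
    rw [this, e]
    generalize u x ^ (-k-2) = a
    generalize u x ^ (p-1) = b
    rw [hpk]
    field_simp
    ring
  have c1 := const_Ioi (f := fun x => (v1 x + α * v x) * exp (-(α * x))) (f' := fun _ => 0) (by
    intro x hx
    have h1 := (dv1 x hx).add ((dv x hx).const_mul α)
    have h2 := (((hasDerivAt_id x).const_mul α).neg).exp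
    refine HasDerivAt.congr_deriv (h1.mul h2) ?_
    simp; ring) (by simp)
  have c2 := const_Ioi (f := fun x => (v1 x - α * v x) * exp (α * x)) (f' := fun _ => 0) (by
    intro x hx
    have h1 := (dv1 x hx).sub ((dv x hx).const_mul α)
    have h2 := (((hasDerivAt_id x).const_mul α)).exp
    refine HasDerivAt.congr_deriv (h1.mul h2) ?_
    simp; ring) (by simp)
  set C1 := (v1 1 + α * v 1) * exp (-(α * 1)) with hC1
  set C2 := (v1 1 - α * v 1) * exp (α * 1) with hC2
  have hfor : ∀ x > 0, v x = C1 / (2 * α) * exp (α * x) + -C2 / (2 * α) * exp (-(α * x)) := by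
    intro x hx
    rw [← c1 x hx, ← c2 x hx]
    have : exp (α * x) * exp (-(α * x)) = 1 := by rw [← exp_add]; simp
    field_simp
    linear_combination (-2 * α * v x) * this
  refine ⟨C1 / (2 * α), -C2 / (2 * α), ?_, ?_⟩
  · have h1 : C1 * C2 = v1 1 ^ 2 - α ^ 2 * v 1 ^ 2 := by
      have : exp (α * 1) * exp (-(α * 1)) = 1 := by rw [← exp_add]; simp
      rw [hC1, hC2]
      linear_combination (v1 1 ^ 2 - α ^ 2 * v 1 ^ 2) * this
    have h2 : v1 1 ^ 2 - α ^ 2 * v 1 ^ 2 = - (2 * k ^ 2 / p) := by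
      have e := hen 1 one_pos
      simp only [hv, hv1]
      have e1 : (u 1 ^ (-k - 1)) ^ 2 * u 1 ^ p = 1 := by
        rw [← rpow_natCast, ← rpow_mul (hpos 1).le, ← rpow_add (hpos 1), hpk]
        convert rpow_zero (u 1) using 2; push_cast; ring
      have e2 : u 1 ^ (-k) = u 1 ^ (-k - 1) * u 1 := by
        conv_rhs => rw [← rpow_one (u 1), ← rpow_mul (hpos 1).le]
        rw [← rpow_add (hpos 1)]; congr 1; ring
      rw [e2, hα2]
      have : p ≠ 0 := by linarith
      linear_combination k ^ 2 * (u 1 ^ (-k - 1)) ^ 2 * e - 2 * k ^ 2 / p * e1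
    have h3 : C1 / (2 * α) * (-C2 / (2 * α)) = - (C1 * C2) / (4 * α ^ 2) := by
      field_simp; ring
    rw [h3, h1, h2, hα2]
    have : p ≠ 0 := by linarith
    field_simp
    norm_num
  · have hc : Continuous v := hcont.rpow_const (fun x => Or.inl (hpos x).ne')
    have hclo : closure (Ioi (0:ℝ)) = Ici 0 := closure_Ioi 0
    intro x hx
    have : EqOn v (fun x => C1 / (2 * α) * exp (α * x) + -C2 / (2 * α) * exp (-(α * x)))
        (closure (Ioi (0:ℝ))) :=
      Set.EqOn.closure (fun x hx => hfor x hx) hc (by fun_prop)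
    exact this (by rw [hclo]; exact hx)

lemma integrable_exp_abs {c : ℝ} (hc : 0 < c) : Integrable (fun x : ℝ => exp (-c * |x|)) := by
  rw [← integrableOn_univ, ← Iic_union_Ioi (a := (0:ℝ))]
  refine IntegrableOn.union ?_ ?_
  · refine (integrableOn_exp_mul_Iic hc 0).congr_fun ?_ measurableSet_Iic
    intro x hx
    simp [abs_of_nonpos (show x ≤ 0 from hx)]
  · refine (integrableOn_exp_mul_Ioi (neg_lt_zero.2 hc) 0).congr_fun ?_ measurableSet_Ioi
    intro x hx
    simp [abs_of_pos (show 0 < x from hx)]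

/-- the exponential combination -/
def Vf (A B α x : ℝ) : ℝ := A * exp (α * x) + B * exp (-(α * x))

/-- its derivative -/
def Wf (A B α x : ℝ) : ℝ := α * (A * exp (α * x) - B * exp (-(α * x)))

lemma Vf_pos {A B : ℝ} (hA : 0 < A) (hB : 0 < B) (α x : ℝ) : 0 < Vf A B α x := by
  unfold Vf; positivity

lemma hasDerivAt_Vf (A B α x : ℝ) : HasDerivAt (Vf A B α) (Wf A B α x) x := by
  have h1 := ((((hasDerivAt_id x).const_mul α)).exp).const_mul A
  have h2 := ((((hasDerivAt_id x).const_mul α).neg).exp).const_mul B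
  refine HasDerivAt.congr_deriv (h1.add h2) ?_
  simp [Wf]; ring

lemma hasDerivAt_Wf (A B α x : ℝ) : HasDerivAt (Wf A B α) (α ^ 2 * Vf A B α x) x := by
  have h1 := ((((hasDerivAt_id x).const_mul α)).exp).const_mul A
  have h2 := ((((hasDerivAt_id x).const_mul α).neg).exp).const_mul B
  refine HasDerivAt.congr_deriv ((h1.sub h2).const_mul α) ?_
  simp [Vf]; ring

lemma Wf_sq (A B α x : ℝ) : Wf A B α x ^ 2 = α ^ 2 * Vf A B α x ^ 2 - 4 * α ^ 2 * (A * B) := by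
  have : exp (α * x) * exp (-(α * x)) = 1 := by rw [← exp_add]; simp
  unfold Wf Vf
  linear_combination (-4 * α ^ 2 * A * B) * this

/-- the half-line profile -/
def Uf (A B α k x : ℝ) : ℝ := Vf A B α x ^ (-1 / k)

/-- its derivative -/
def Uf1 (A B α k x : ℝ) : ℝ := (-1 / k) * (Vf A B α x ^ (-1 / k - 1) * Wf A B α x)

lemma hasDerivAt_Uf {A B : ℝ} (hA : 0 < A) (hB : 0 < B) (α k x : ℝ) :
    HasDerivAt (Uf A B α k) (Uf1 A B α k x) x := by
  refine HasDerivAt.congr_deriv ((hasDerivAt_Vf A B α x).rpow_const (p := -1 / k)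
    (Or.inl (Vf_pos hA hB α x).ne')) ?_
  unfold Uf1; ring

lemma hasDerivAt_Uf1 {p ω A B α k : ℝ} (hp : 2 < p) (hω : 0 < ω) (hA : 0 < A) (hB : 0 < B)
    (hk : k = (p - 2) / 2) (hα : α = k * √ω) (hAB : A * B = 1 / (2 * p * ω)) (x : ℝ) :
    HasDerivAt (Uf1 A B α k) (ω * Uf A B α k x - Uf A B α k x ^ (p - 1)) x := by
  have hk0 : 0 < k := by rw [hk]; linarith
  have hα2 : α ^ 2 = k ^ 2 * ω := by rw [hα, mul_pow, sq_sqrt hω.le]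
  have hpk : p = 2 * k + 2 := by rw [hk]; ring
  have hV := Vf_pos hA hB α x
  have h1 := (hasDerivAt_Vf A B α x).rpow_const (p := -1 / k - 1) (Or.inl hV.ne')
  refine HasDerivAt.congr_deriv ((h1.mul (hasDerivAt_Wf A B α x)).const_mul (-1 / k)) ?_
  have hW := Wf_sq A B α x
  unfold Uf
  rw [← rpow_mul hV.le]
  have e1 : -1 / k * (p - 1) = -1 / k - 2 := by rw [hpk]; field_simp; ring
  have e2 : -1 / k - 1 - 1 = -1 / k - 2 := by ring
  have r1 : Vf A B α x ^ (-1 / k) = Vf A B α x ^ (-1 / k - 2) * Vf A B α x ^ 2 := by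
    rw [← rpow_natCast, ← rpow_add hV]; norm_num
  have r2 : Vf A B α x ^ (-1 / k - 1) = Vf A B α x ^ (-1 / k - 2) * Vf A B α x := by
    conv_rhs => rw [← rpow_one (Vf A B α x), ← rpow_mul hV.le]
    rw [← rpow_add hV]; congr 1; ring
  rw [e1, e2, r1, r2]
  rw [hAB, hα2] at hW
  rw [hα2]
  generalize Vf A B α x ^ (-1 / k - 2) = a
  generalize Vf A B α x = V at *
  generalize Wf A B α x = W at *
  have : W * (-1 / k - 1) * a * W = (-1 / k - 1) * a * W ^ 2 := by ring
  rw [this, hW, hpk]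
  field_simp
  ring

lemma abs_Uf1_le {A B α k : ℝ} (hA : 0 < A) (hB : 0 < B) (hk : 0 < k) (hα : 0 < α) (x : ℝ) :
    |Uf1 A B α k x| ≤ α / k * Uf A B α k x := by
  have hV := Vf_pos hA hB α x
  have hW : |Wf A B α x| ≤ α * Vf A B α x := by
    apply abs_le_of_sq_le_sq _ (by positivity)
    rw [Wf_sq, mul_pow]
    have : 0 < 4 * α ^ 2 * (A * B) := by positivity
    linarith
  have r2 : Uf A B α k x = Vf A B α x ^ (-1 / k - 1) * Vf A B α x := by
    unfold Uf
    conv_rhs => rw [← rpow_one (Vf A B α x), ← rpow_mul hV.le]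
    rw [← rpow_add hV]; congr 1; ring
  rw [r2]
  unfold Uf1
  have : |(-1:ℝ) / k| = 1 / k := by rw [abs_div, abs_of_pos hk]; simp
  rw [abs_mul, abs_mul, this, abs_of_pos (rpow_pos_of_pos hV _)]
  calc 1 / k * (Vf A B α x ^ (-1 / k - 1) * |Wf A B α x|)
      ≤ 1 / k * (Vf A B α x ^ (-1 / k - 1) * (α * Vf A B α x)) := by gcongr
    _ = _ := by ring

lemma Uf_le {A B α k : ℝ} (hA : 0 < A) (hB : 0 < B) (hk : 0 < k) (x : ℝ) :
    Uf A B α k x ≤ A ^ (-1 / k) * exp (-(α / k) * x) := by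
  unfold Uf
  have h1 : Vf A B α x ^ (-1 / k) ≤ (A * exp (α * x)) ^ (-1 / k) := by
    apply rpow_le_rpow_of_nonpos (by positivity)
    · unfold Vf
      have := exp_pos (-(α * x))
      nlinarith
    · exact div_nonpos_of_nonpos_of_nonneg (by norm_num) hk.le
  refine h1.trans_eq ?_
  rw [mul_rpow hA.le (exp_pos _).le, ← exp_mul]
  congr 2
  field_simp

lemma Uf_pos {A B : ℝ} (hA : 0 < A) (hB : 0 < B) (α k x : ℝ) : 0 < Uf A B α k x :=
  rpow_pos_of_pos (Vf_pos hA hB α x) _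

lemma Uf_contDiff {A B : ℝ} (hA : 0 < A) (hB : 0 < B) (α k : ℝ) : ContDiff ℝ 2 (Uf A B α k) := by
  unfold Uf
  refine ContDiff.rpow_const_of_ne ?_ (fun x => (Vf_pos hA hB α x).ne')
  unfold Vf
  fun_prop

/-- the even profile on the line -/
def Us (A B α k x : ℝ) : ℝ := Uf A B α k |x|

lemma hasDerivAt_Us_pos {A B : ℝ} (hA : 0 < A) (hB : 0 < B) (α k : ℝ) {x : ℝ} (hx : 0 < x) :
    HasDerivAt (Us A B α k) (Uf1 A B α k x) x := by
  refine (hasDerivAt_Uf hA hB α k x).congr_of_eventuallyEq ?_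
  filter_upwards [lt_mem_nhds hx] with y hy
  simp [Us, abs_of_pos hy]

lemma hasDerivAt_Us_neg {A B : ℝ} (hA : 0 < A) (hB : 0 < B) (α k : ℝ) {x : ℝ} (hx : x < 0) :
    HasDerivAt (Us A B α k) (-Uf1 A B α k (-x)) x := by
  have h := (hasDerivAt_Uf hA hB α k (-x)).comp x (hasDerivAt_neg x)
  rw [mul_neg_one] at h
  refine h.congr_of_eventuallyEq ?_
  filter_upwards [gt_mem_nhds hx] with y hy
  simp [Us, abs_of_neg hy]

lemma exists_sol {p q ω A B α k s : ℝ} (hp : 2 < p) (hω : 0 < ω) (hA : 0 < A) (hB : 0 < B)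
    (hk : k = (p - 2) / 2) (hα : α = k * √ω) (hAB : A * B = 1 / (2 * p * ω)) (hs : 0 < s)
    (hsum : A + B = s ^ (-k)) (hdiff : 2 * √ω * s ^ k * (A - B) = s ^ (q - 2)) :
    (∃ u' : ℝ → ℝ, (Continuous (Us A B α k) ∧ Integrable (fun x => (Us A B α k x) ^ 2) ∧
        Integrable (fun x => (u' x) ^ 2) ∧
        ∀ a b : ℝ, a ≤ b → Us A B α k b - Us A B α k a = ∫ t in a..b, u' t)) ∧
      (∀ x, 0 < Us A B α k x) ∧
      ContDiffOn ℝ 2 (Us A B α k) {(0 : ℝ)}ᶜ ∧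
      (∀ x : ℝ, x ≠ 0 → deriv (deriv (Us A B α k)) x + Us A B α k x ^ (p - 1) = ω * Us A B α k x) ∧
      (∃ dminus dplus : ℝ,
        HasDerivWithinAt (Us A B α k) dminus (Set.Iic 0) 0 ∧
        HasDerivWithinAt (Us A B α k) dplus (Set.Ici 0) 0 ∧
        dminus - dplus = Us A B α k 0 ^ (q - 1)) := by
  have hk0 : 0 < k := by rw [hk]; linarith
  have hα0 : 0 < α := by rw [hα]; positivity
  have hUc : Continuous (Uf A B α k) := (Uf_contDiff hA hB α k).continuous
  have hc : Continuous (Us A B α k) := hUc.comp continuous_abs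
  have hint : Integrable (fun x => (Us A B α k x) ^ 2) := by
    refine Integrable.mono' (g := fun x => (A ^ (-1 / k)) ^ 2 * exp (-(2 * (α / k)) * |x|))
      ((integrable_exp_abs (by positivity)).const_mul _) (hc.pow 2).aestronglyMeasurable ?_
    refine Eventually.of_forall fun x => ?_
    rw [Real.norm_eq_abs, abs_of_nonneg (sq_nonneg _)]
    have h1 := Uf_le (α := α) hA hB hk0 |x|
    have h2 := (Uf_pos hA hB α k |x|).le
    calc Us A B α k x ^ 2 ≤ (A ^ (-1 / k) * exp (-(α / k) * |x|)) ^ 2 := by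
          unfold Us; gcongr
      _ = _ := by rw [mul_pow, ← exp_nat_mul]; congr 2; push_cast; ring
  have hder : ∀ x ≠ 0, HasDerivAt (Us A B α k) (deriv (Us A B α k) x) x := by
    intro x hx
    rcases lt_or_gt_of_ne hx with h | h
    · exact (hasDerivAt_Us_neg hA hB α k h).differentiableAt.hasDerivAt
    · exact (hasDerivAt_Us_pos hA hB α k h).differentiableAt.hasDerivAt
  have hbd : ∀ x ≠ 0, |deriv (Us A B α k) x| ≤ α / k * Us A B α k x := by
    intro x hx
    rcases lt_or_gt_of_ne hx with h | h
    · rw [(hasDerivAt_Us_neg hA hB α k h).deriv, abs_neg]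
      have := abs_Uf1_le hA hB hk0 hα0 (-x)
      rwa [Us, abs_of_neg h]
    · rw [(hasDerivAt_Us_pos hA hB α k h).deriv]
      have := abs_Uf1_le hA hB hk0 hα0 x
      rwa [Us, abs_of_pos h]
  have hne : ∀ᵐ x : ℝ, x ≠ 0 := by
    simp [ae_iff]
  refine ⟨⟨deriv (Us A B α k), hc, hint, ?_, ?_⟩, fun x => Uf_pos hA hB _ _ _, ?_, ?_, ?_⟩
  · refine Integrable.mono' (hint.const_mul ((α / k) ^ 2))
      ((measurable_deriv _).pow_const 2).aestronglyMeasurable ?_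
    filter_upwards [hne] with x hx
    rw [Real.norm_eq_abs, abs_of_nonneg (sq_nonneg _), ← sq_abs, ← mul_pow]
    have := hbd x hx
    gcongr
  · intro a b hab
    symm
    refine integral_eq_of_hasDerivAt_off_countable_of_le _ _ hab (s := {0}) (countable_singleton 0)
      hc.continuousOn (fun x hx => hder x hx.2) ?_
    refine IntervalIntegrable.mono_fun' (g := fun x => α / k * Us A B α k x)
      ((hc.const_mul _).intervalIntegrable _ _) (measurable_deriv _).aestronglyMeasurable ?_
    apply ae_restrict_of_ae
    filter_upwards [hne] with x hx
    exact hbd x hx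
  · intro x hx
    exact ((Uf_contDiff hA hB α k).contDiffAt.comp x (contDiffAt_abs hx)).contDiffWithinAt
  · intro x hx
    rcases lt_or_gt_of_ne hx with h | h
    · have h1 : deriv (Us A B α k) =ᶠ[𝓝 x] fun y => -Uf1 A B α k (-y) := by
        filter_upwards [gt_mem_nhds h] with y hy
        exact (hasDerivAt_Us_neg hA hB α k hy).deriv
      have h2 := ((hasDerivAt_Uf1 hp hω hA hB hk hα hAB (-x)).comp x (hasDerivAt_neg x)).neg
      rw [h1.deriv_eq]
      have h3 : deriv (fun y => -Uf1 A B α k (-y)) x = _ := h2.deriv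
      rw [h3]
      simp only [Us, abs_of_neg h]
      ring
    · have h1 : deriv (Us A B α k) =ᶠ[𝓝 x] Uf1 A B α k := by
        filter_upwards [lt_mem_nhds h] with y hy
        exact (hasDerivAt_Us_pos hA hB α k hy).deriv
      rw [h1.deriv_eq, (hasDerivAt_Uf1 hp hω hA hB hk hα hAB x).deriv]
      simp only [Us, abs_of_pos h]
      ring
  · refine ⟨-Uf1 A B α k 0, Uf1 A B α k 0, ?_, ?_, ?_⟩
    · have h := (hasDerivAt_Uf hA hB α k (-0)).comp 0 (hasDerivAt_neg 0)
      rw [mul_neg_one, neg_zero] at h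
      refine h.hasDerivWithinAt.congr ?_ (by simp [Us])
      intro y hy
      simp [Us, abs_of_nonpos (show y ≤ 0 from hy)]
    · refine (hasDerivAt_Uf hA hB α k 0).hasDerivWithinAt.congr ?_ (by simp [Us])
      intro y hy
      simp [Us, abs_of_nonneg (show 0 ≤ y from hy)]
    · have hV : Vf A B α 0 = s ^ (-k) := by simp [Vf, hsum]
      have hU : Us A B α k 0 = s := by
        simp only [Us, abs_zero, Uf]
        rw [hV, ← rpow_mul hs.le]
        have : -k * (-1 / k) = 1 := by field_simp
        rw [this, rpow_one]
      have hW : Wf A B α 0 = α * (A - B) := by simp [Wf]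
      rw [hU]
      unfold Uf1
      rw [hV, hW, ← rpow_mul hs.le]
      have e1 : -k * (-1 / k - 1) = k + 1 := by field_simp; ring
      have e2 : q - 1 = (q - 2) + 1 := by ring
      rw [e1, e2, rpow_add hs, rpow_add hs, ← hdiff, rpow_one, hα]
      field_simp
      ring

lemma sol_form {p q ω α k : ℝ} (hp : 2 < p) (hω : 0 < ω)
    (hk : k = (p - 2) / 2) (hα : α = k * √ω) {u : ℝ → ℝ} (hc : Continuous u)
    (hint : Integrable (fun x => u x ^ 2)) (hpos : ∀ x, 0 < u x)
    (hcd : ContDiffOn ℝ 2 u {(0 : ℝ)}ᶜ)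
    (hode : ∀ x : ℝ, x ≠ 0 → deriv (deriv u) x + u x ^ (p - 1) = ω * u x)
    (hj : ∃ dminus dplus : ℝ,
        HasDerivWithinAt u dminus (Set.Iic 0) 0 ∧
        HasDerivWithinAt u dplus (Set.Ici 0) 0 ∧
        dminus - dplus = u 0 ^ (q - 1)) :
    ∃ A B : ℝ, 0 < A ∧ 0 < B ∧ A * B = 1 / (2 * p * ω) ∧ A + B = u 0 ^ (-k) ∧
      2 * √ω * u 0 ^ k * (A - B) = u 0 ^ (q - 2) ∧ u = Us A B α k := by
  have hk0 : 0 < k := by rw [hk]; linarith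
  have hα0 : 0 < α := by rw [hα]; positivity
  have hd : ∀ x ≠ 0, HasDerivAt u (deriv u x) x := by
    intro x hx
    exact ((hcd.contDiffAt (isOpen_compl_singleton.mem_nhds hx)).differentiableAt
      (by norm_num)).hasDerivAt
  have hd2 : ∀ x ≠ 0, HasDerivAt (deriv u) (ω * u x - u x ^ (p - 1)) x := by
    intro x hx
    have h1 : ContDiffOn ℝ 1 (deriv u) {(0 : ℝ)}ᶜ :=
      hcd.deriv_of_isOpen isOpen_compl_singleton (by norm_num)
    have h2 := ((h1.contDiffAt (isOpen_compl_singleton.mem_nhds hx)).differentiableAt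
      (by norm_num)).hasDerivAt
    rwa [show deriv (deriv u) x = ω * u x - u x ^ (p - 1) by linarith [hode x hx]] at h2
  obtain ⟨A, B, hAB, hr⟩ := half_line hp hω hc hpos hint (fun x hx => hd x hx.ne')
    (fun x hx => hd2 x hx.ne') k α hk hα
  obtain ⟨A', B', hAB', hl⟩ := half_line hp hω (u := fun x => u (-x)) (u1 := fun x => -deriv u (-x))
    (hc.comp continuous_neg) (fun x => hpos (-x)) hint.comp_neg
    (fun x hx => by
      have h := (hd (-x) (by linarith)).comp x (hasDerivAt_neg x)
      rw [mul_neg_one] at h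
      exact h)
    (fun x hx => by
      have h := ((hd2 (-x) (by linarith)).comp x (hasDerivAt_neg x)).neg
      rw [mul_neg_one, neg_neg] at h
      exact h) k α hk hα
  have posAB : ∀ A B : ℝ, A * B = 1 / (2 * p * ω) → A + B = u 0 ^ (-k) → 0 < A ∧ 0 < B := by
    intro A B h1 h2
    have h3 : 0 < A * B := by rw [h1]; have : 0 < p := by linarith
                              positivity
    have h4 : 0 < A + B := by rw [h2]; exact rpow_pos_of_pos (hpos 0) _
    rcases pos_and_pos_or_neg_and_neg_of_mul_pos h3 with h | h
    · exact h
    · linarith [h.1, h.2]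
  have s1 : A + B = u 0 ^ (-k) := by simpa using (hr 0 le_rfl).symm
  have s2 : A' + B' = u 0 ^ (-k) := by simpa using (hl 0 le_rfl).symm
  obtain ⟨hA, hB⟩ := posAB A B hAB s1
  obtain ⟨hA', hB'⟩ := posAB A' B' hAB' s2
  have key : ∀ y v : ℝ, 0 < y → y ^ (-k) = v → y = v ^ (-1 / k) := by
    intro y v hy h
    rw [← h, ← rpow_mul hy.le]
    have : -k * (-1 / k) = 1 := by field_simp
    rw [this, rpow_one]
  have hr' : ∀ x ≥ 0, u x = Uf A B α k x := fun x hx => key _ _ (hpos x) (hr x hx)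
  have hl' : ∀ x ≥ 0, u (-x) = Uf A' B' α k x := fun x hx => key _ _ (hpos (-x)) (hl x hx)
  have hU1 : ∀ A B : ℝ, A + B = u 0 ^ (-k) → Uf1 A B α k 0 = - (√ω * u 0 ^ k * u 0 * (A - B)) := by
    intro A B h
    have hV : Vf A B α 0 = u 0 ^ (-k) := by simp [Vf, h]
    have hW : Wf A B α 0 = α * (A - B) := by simp [Wf]
    unfold Uf1
    rw [hV, hW, ← rpow_mul (hpos 0).le]
    have e1 : -k * (-1 / k - 1) = k + 1 := by field_simp; ring
    rw [e1, rpow_add (hpos 0), rpow_one, hα]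
    field_simp
  obtain ⟨dm, dp, hm, hpl, hjump⟩ := hj
  have hdp : dp = Uf1 A B α k 0 := by
    have h1 : HasDerivWithinAt u (Uf1 A B α k 0) (Ici 0) 0 :=
      (hasDerivAt_Uf hA hB α k 0).hasDerivWithinAt.congr (fun y hy => hr' y hy) (hr' 0 le_rfl)
    exact (uniqueDiffWithinAt_Ici 0).eq_deriv _ hpl h1
  have hdm : dm = -Uf1 A' B' α k 0 := by
    have h1 : HasDerivWithinAt u (-Uf1 A' B' α k 0) (Iic 0) 0 := by
      have h := (hasDerivAt_Uf hA' hB' α k (-0)).comp 0 (hasDerivAt_neg 0)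
      rw [mul_neg_one, neg_zero] at h
      refine h.hasDerivWithinAt.congr (fun y hy => ?_) ?_
      · simpa using hl' (-y) (neg_nonneg.2 hy)
      · simpa using hl' 0 le_rfl
    exact (uniqueDiffWithinAt_Iic 0).eq_deriv _ hm h1
  rw [hdp, hdm, hU1 A B s1, hU1 A' B' s2] at hjump
  have hs := hpos 0
  have e2 : q - 1 = (q - 2) + 1 := by ring
  rw [e2, rpow_add hs, rpow_one] at hjump
  have hj2 : √ω * u 0 ^ k * ((A - B) + (A' - B')) = u 0 ^ (q - 2) := by
    apply mul_right_cancel₀ hs.ne'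
    linarith
  have hne : (A - B) + (A' - B') ≠ 0 := by
    intro h0
    rw [h0, mul_zero] at hj2
    exact (rpow_pos_of_pos hs (q - 2)).ne hj2
  have hDD : A - B = A' - B' := by
    have : ((A - B) - (A' - B')) * ((A - B) + (A' - B')) = 0 := by
      have h3 : A + B = A' + B' := s1.trans s2.symm
      have h4 : A * B = A' * B' := hAB.trans hAB'.symm
      linear_combination (A + B + A' + B') * h3 - 4 * h4
    rcases mul_eq_zero.1 this with h | h
    · linarith
    · exact absurd h hne
  have hAA : A' = A := by linarith
  have hBB : B' = B := by linarith
  subst hAA hBB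
  refine ⟨A', B', hA, hB, hAB, s1, ?_, ?_⟩
  · rw [← hj2]; ring
  · funext x
    rcases le_total 0 x with h | h
    · rw [hr' x h, Us, abs_of_nonneg h]
    · have := hl' (-x) (by linarith)
      rw [neg_neg] at this
      rw [this, Us, abs_of_nonpos h]

/-- the scalar equation for the value at the origin -/
def Gf (p q ω s : ℝ) : ℝ := 2 / (p * ω) * s ^ (p - 2) + 1 / (4 * ω) * s ^ (2 * (q - 2))

lemma Gf_inj {p q ω : ℝ} (hp : 2 < p) (hq : 2 < q) (hω : 0 < ω) :
    StrictMonoOn (Gf p q ω) (Ici 0) := by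
  intro a ha b hb hab
  have hp0 : 0 < p := by linarith
  have h1 : a ^ (p - 2) < b ^ (p - 2) := rpow_lt_rpow ha hab (by linarith)
  have h2 : a ^ (2 * (q - 2)) < b ^ (2 * (q - 2)) := rpow_lt_rpow ha hab (by linarith)
  unfold Gf
  gcongr

lemma Gf_exists {p q ω : ℝ} (hp : 2 < p) (hq : 2 < q) (hω : 0 < ω) :
    ∃ s, 0 < s ∧ Gf p q ω s = 1 := by
  have hp0 : 0 < p := by linarith
  have hp2 : 0 < p - 2 := by linarith
  have hq2 : 0 < 2 * (q - 2) := by linarith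
  set b := (p * ω / 2) ^ (1 / (p - 2)) with hb
  have hb0 : 0 < b := by positivity
  have hGb : 1 ≤ Gf p q ω b := by
    unfold Gf
    have e : b ^ (p - 2) = p * ω / 2 := by
      rw [hb, ← rpow_mul (by positivity), one_div_mul_cancel hp2.ne', rpow_one]
    rw [e]
    have : 2 / (p * ω) * (p * ω / 2) = 1 := by field_simp
    rw [this]
    have : 0 ≤ 1 / (4 * ω) * b ^ (2 * (q - 2)) := by positivity
    linarith
  have hG0 : Gf p q ω 0 = 0 := by
    simp [Gf, zero_rpow hp2.ne', zero_rpow hq2.ne']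
  have hcont : Continuous (Gf p q ω) := by
    unfold Gf
    exact (continuous_const.mul (continuous_rpow_const hp2.le)).add
      (continuous_const.mul (continuous_rpow_const hq2.le))
  obtain ⟨s, hs, h⟩ := intermediate_value_Icc hb0.le hcont.continuousOn
    (show (1:ℝ) ∈ Icc (Gf p q ω 0) (Gf p q ω b) from ⟨by rw [hG0]; norm_num, hGb⟩)
  refine ⟨s, lt_of_le_of_ne hs.1 ?_, h⟩
  rintro rfl
  rw [hG0] at h
  norm_num at h

lemma Gf_of {p q ω k s A B : ℝ} (hp : 2 < p) (hω : 0 < ω) (hk : k = (p - 2) / 2)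
    (hs : 0 < s) (hAB : A * B = 1 / (2 * p * ω)) (hsum : A + B = s ^ (-k))
    (hdiff : 2 * √ω * s ^ k * (A - B) = s ^ (q - 2)) : Gf p q ω s = 1 := by
  have hp0 : 0 < p := by linarith
  unfold Gf
  have e1 : s ^ (p - 2) = (s ^ k) ^ 2 := by
    rw [← rpow_natCast, ← rpow_mul hs.le, hk]; congr 1; push_cast; ring
  have e2 : s ^ (2 * (q - 2)) = (s ^ (q - 2)) ^ 2 := by
    rw [← rpow_natCast, ← rpow_mul hs.le]; congr 1; push_cast; ring
  have e3 : s ^ k * (A + B) = 1 := by rw [hsum, ← rpow_add hs]; simp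
  have e4 : √ω ^ 2 = ω := sq_sqrt hω.le
  have e5 : (2 * √ω * s ^ k * (A - B)) ^ 2 = 4 * ω * (s ^ k) ^ 2 * (A - B) ^ 2 := by
    rw [mul_pow, mul_pow, mul_pow, e4]; ring
  rw [e1, e2, ← hdiff, e5]
  have e6 : 2 / (p * ω) = 4 * (A * B) := by rw [hAB]; field_simp; norm_num
  rw [e6]
  have : 1 / (4 * ω) * (4 * ω * (s ^ k) ^ 2 * (A - B) ^ 2) = (s ^ k) ^ 2 * (A - B) ^ 2 := by
    field_simp
  rw [this]
  linear_combination (s ^ k * (A + B) + 1) * e3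

lemma of_Gf {p q ω k s : ℝ} (hp : 2 < p) (hω : 0 < ω) (hk : k = (p - 2) / 2)
    (hs : 0 < s) (hG : Gf p q ω s = 1) : ∃ A B : ℝ, 0 < A ∧ 0 < B ∧
      A * B = 1 / (2 * p * ω) ∧ A + B = s ^ (-k) ∧ 2 * √ω * s ^ k * (A - B) = s ^ (q - 2) := by
  have hp0 : 0 < p := by linarith
  have hw : 0 < √ω := sqrt_pos.2 hω
  unfold Gf at hG
  have e1 : s ^ (p - 2) = (s ^ k) ^ 2 := by
    rw [← rpow_natCast, ← rpow_mul hs.le, hk]; congr 1; push_cast; ring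
  have e2 : s ^ (2 * (q - 2)) = (s ^ (q - 2)) ^ 2 := by
    rw [← rpow_natCast, ← rpow_mul hs.le]; congr 1; push_cast; ring
  have e4 : √ω ^ 2 = ω := sq_sqrt hω.le
  have e3 : s ^ k * s ^ (-k) = 1 := by rw [← rpow_add hs]; simp
  rw [e1, e2] at hG
  have hX : 0 < s ^ k := rpow_pos_of_pos hs _
  have hY : 0 < s ^ (q - 2) := rpow_pos_of_pos hs _
  have hZ : s ^ (-k) = 1 / s ^ k := by field_simp; linarith
  rw [hZ]
  generalize s ^ k = X at *
  generalize s ^ (q - 2) = Y at *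
  have hsq : 1 - (Y / (2 * √ω)) ^ 2 = 2 / (p * ω) * X ^ 2 := by
    rw [div_pow, mul_pow, e4, ← hG]; field_simp; ring
  have hlt : Y / (2 * √ω) < 1 := by
    have : 0 < 2 / (p * ω) * X ^ 2 := by positivity
    have h0 : 0 < Y / (2 * √ω) := by positivity
    nlinarith
  refine ⟨1 / X * (1 + Y / (2 * √ω)) / 2, 1 / X * (1 - Y / (2 * √ω)) / 2, by positivity, ?_, ?_, ?_, ?_⟩
  · have : 0 < 1 - Y / (2 * √ω) := by linarith
    positivity
  · have : 1 / X * (1 + Y / (2 * √ω)) / 2 * (1 / X * (1 - Y / (2 * √ω)) / 2)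
        = 1 / (4 * X ^ 2) * (1 - (Y / (2 * √ω)) ^ 2) := by field_simp; ring
    rw [this, hsq]; field_simp; norm_num
  · ring
  · field_simp; ring

theorem stmt17 (p q ω : ℝ) (hp : 2 < p) (hp' : p ≤ 6) (hq : 2 < q) (hq' : q ≤ 4)
    (hω : 0 < ω) :
    ∃! u : ℝ → ℝ,
      (∃ u' : ℝ → ℝ, IsH1 u u') ∧
      (∀ x, 0 < u x) ∧
      ContDiffOn ℝ 2 u {(0 : ℝ)}ᶜ ∧
      (∀ x : ℝ, x ≠ 0 → deriv (deriv u) x + u x ^ (p - 1) = ω * u x) ∧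
      (∃ dminus dplus : ℝ,
        HasDerivWithinAt u dminus (Set.Iic 0) 0 ∧
        HasDerivWithinAt u dplus (Set.Ici 0) 0 ∧
        dminus - dplus = u 0 ^ (q - 1)) := by

  obtain ⟨s, hs, hG⟩ := Gf_exists hp hq hω
  obtain ⟨A, B, hA, hB, hAB, hsum, hdiff⟩ := of_Gf (q := q) hp hω rfl hs hG
  refine ⟨Us A B ((p - 2) / 2 * √ω) ((p - 2) / 2), ?_, ?_⟩
  · exact exists_sol hp hω hA hB rfl rfl hAB hs hsum hdiff
  · rintro u ⟨⟨u', hc, hint, -, -⟩, hpos, hcd, hode, hj⟩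
    obtain ⟨A', B', hA', hB', hAB', hsum', hdiff', hu⟩ :=
      sol_form hp hω rfl rfl hc hint hpos hcd hode hj
    have hG' := Gf_of hp hω rfl (hpos 0) hAB' hsum' hdiff'
    have hss : u 0 = s := (Gf_inj hp hq hω).injOn (hpos 0).le hs.le (hG'.trans hG.symm)
    rw [hss] at hsum' hdiff'
    have hX : 0 < 2 * √ω * s ^ ((p - 2) / 2) := by
      have := sqrt_pos.2 hω
      positivity
    have hD : A' - B' = A - B := mul_left_cancel₀ hX.ne' (hdiff'.trans hdiff.symm)
    have h1 : A' = A := by linarith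
    have h2 : B' = B := by linarith
    rw [hu, h1, h2]
end
end

section
/- Let 2 < p ≤ 6, 2 < q ≤ 4, ω > 0, and let a > 0 satisfy 2·tanh(((p−2)/2)·√ω·a) = (p/2)^{(q−2)/(p−2)} · ω^{(q−2)/(p−2) − 1/2} · (1 − tanh²(((p−2)/2)·√ω·a))^{(q−2)/(p−2)}. Define u(x) := [ (p/2)·ω·(1 − tanh²( ((p−2)/2)·√ω·(|x| + a) )) ]^{1/(p−2)}. Then u ∈ H¹(ℝ), u > 0 on ℝ, u is twice continuously differentiable on ℝ ∖ {0} with u''(x) + u(x)^{p−1} = ω·u(x) for every x ≠ 0, the one-sided derivatives u'(0⁻) and u'(0⁺) exist, and u'(0⁻) − u'(0⁺) = u(0)^{q−1}. -/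
open MeasureTheory Real Set

noncomputable section

lemma tanh_aux (x : ℝ) : 1 - Real.tanh x ^ 2 = (Real.cosh x ^ 2)⁻¹ := by
  have h := Real.cosh_pos x
  rw [Real.tanh_eq_sinh_div_cosh]
  field_simp
  linarith [Real.cosh_sq x]

lemma tanh_aux_pos (x : ℝ) : 0 < 1 - Real.tanh x ^ 2 := by
  rw [tanh_aux]
  have h := Real.cosh_pos x
  positivity

lemma tanh_hasDerivAt_aux (x : ℝ) : HasDerivAt Real.tanh (1 - Real.tanh x ^ 2) x := by
  have h := Real.cosh_pos x
  have h1 := (Real.hasDerivAt_sinh x).div (Real.hasDerivAt_cosh x) h.ne'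
  have h2 : Real.tanh = Real.sinh / Real.cosh := by
    funext y
    simp [Real.tanh_eq_sinh_div_cosh]
  rw [h2]
  refine h1.congr_deriv ?_
  rw [Pi.div_apply]
  field_simp

lemma tanh_contDiff_aux {n : WithTop ℕ∞} : ContDiff ℝ n Real.tanh := by
  have h2 : Real.tanh = fun x => Real.sinh x / Real.cosh x := by
    funext y
    simp [Real.tanh_eq_sinh_div_cosh]
  rw [h2]
  exact Real.contDiff_sinh.div Real.contDiff_cosh (fun x => (Real.cosh_pos x).ne')

/-- The soliton profile. -/
def phiAux (p ω : ℝ) (y : ℝ) : ℝ := ((p / 2) * ω *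
      (1 - Real.tanh ((p - 2) / 2 * Real.sqrt ω * y) ^ 2)) ^ (1 / (p - 2))

lemma phiAux_base_pos {p ω : ℝ} (hp : 2 < p) (hω : 0 < ω) (z : ℝ) :
    0 < (p / 2) * ω * (1 - Real.tanh z ^ 2) := by
  have := tanh_aux_pos z
  positivity

lemma phiAux_pos {p ω : ℝ} (hp : 2 < p) (hω : 0 < ω) (y : ℝ) : 0 < phiAux p ω y :=
  Real.rpow_pos_of_pos (phiAux_base_pos hp hω _) _

lemma tanhk_hasDerivAt (k y : ℝ) :
    HasDerivAt (fun y => Real.tanh (k * y)) ((1 - Real.tanh (k * y) ^ 2) * k) y := by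
  have h := (tanh_hasDerivAt_aux (k * y)).comp y ((hasDerivAt_id y).const_mul k)
  refine h.congr_deriv ?_
  ring

lemma phiAux_hasDerivAt {p ω : ℝ} (hp : 2 < p) (hω : 0 < ω) (y : ℝ) :
    HasDerivAt (phiAux p ω)
      (-Real.sqrt ω * Real.tanh ((p - 2) / 2 * Real.sqrt ω * y) * phiAux p ω y) y := by
  have hb := phiAux_base_pos hp hω ((p - 2) / 2 * Real.sqrt ω * y)
  have h0 := tanhk_hasDerivAt ((p - 2) / 2 * Real.sqrt ω) y
  have h1 := (((h0.pow 2).const_sub 1).const_mul (p / 2 * ω)).rpow_const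
    (p := 1 / (p - 2)) (Or.inl hb.ne')
  refine h1.congr_deriv ?_
  simp only [phiAux, Pi.pow_apply]
  rw [Real.rpow_sub_one hb.ne']
  have h3 : p - 2 ≠ 0 := by linarith
  have ht := tanh_aux_pos ((p - 2) / 2 * Real.sqrt ω * y)
  have hp0 : 0 < p := by linarith
  generalize (p / 2 * ω * (1 - Real.tanh ((p - 2) / 2 * Real.sqrt ω * y) ^ 2)) ^ (1 / (p - 2)) = R
  generalize Real.tanh ((p - 2) / 2 * Real.sqrt ω * y) = T at *
  field_simp
  ring

lemma phiAux_deriv2 {p ω : ℝ} (hp : 2 < p) (hω : 0 < ω) (y : ℝ) :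
    HasDerivAt (fun y => -Real.sqrt ω * Real.tanh ((p - 2) / 2 * Real.sqrt ω * y) * phiAux p ω y)
      (ω * phiAux p ω y - phiAux p ω y ^ (p - 1)) y := by
  have hb := phiAux_base_pos hp hω ((p - 2) / 2 * Real.sqrt ω * y)
  have h0 := tanhk_hasDerivAt ((p - 2) / 2 * Real.sqrt ω) y
  have h1 := (h0.const_mul (-Real.sqrt ω)).mul (phiAux_hasDerivAt hp hω y)
  refine h1.congr_deriv ?_
  have hpos := phiAux_pos hp hω y
  have h3 : p - 2 ≠ 0 := by linarith
  have e1 : phiAux p ω y ^ (p - 1) = phiAux p ω y *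
      ((p / 2) * ω * (1 - Real.tanh ((p - 2) / 2 * Real.sqrt ω * y) ^ 2)) := by
    have : p - 1 = 1 + (p - 2) := by ring
    rw [this, Real.rpow_add hpos, Real.rpow_one]
    congr 1
    unfold phiAux
    rw [← Real.rpow_mul hb.le, one_div_mul_cancel h3, Real.rpow_one]
  rw [e1]
  have hs := Real.sq_sqrt hω.le
  generalize phiAux p ω y = R
  generalize Real.tanh ((p - 2) / 2 * Real.sqrt ω * y) = T at *
  generalize Real.sqrt ω = s at *
  subst hs
  ring

lemma phiAux_contDiff {p ω : ℝ} (hp : 2 < p) (hω : 0 < ω) : ContDiff ℝ 2 (phiAux p ω) := by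
  unfold phiAux
  refine ContDiff.rpow_const_of_ne ?_ (fun y => (phiAux_base_pos hp hω _).ne')
  have h : ContDiff ℝ 2 (fun y => Real.tanh ((p - 2) / 2 * Real.sqrt ω * y)) :=
    tanh_contDiff_aux.comp (contDiff_const.mul contDiff_id)
  exact contDiff_const.mul (contDiff_const.sub (h.pow 2))

lemma phiAux_sq_le {p ω : ℝ} (hp : 2 < p) (hω : 0 < ω) (y : ℝ) :
    phiAux p ω y ^ 2 ≤ ((p / 2 * ω * 4) ^ (1 / (p - 2))) ^ 2 * Real.exp (-(2 * Real.sqrt ω) * y) := by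
  set k := (p - 2) / 2 * Real.sqrt ω with hk
  have hp0 : 0 < p := by linarith
  have h3 : 0 < p - 2 := by linarith
  have h1 : 1 - Real.tanh (k * y) ^ 2 ≤ 4 * Real.exp (-2 * (k * y)) := by
    rw [tanh_aux]
    have hc : Real.exp (k * y) / 2 ≤ Real.cosh (k * y) := by
      rw [Real.cosh_eq]
      linarith [Real.exp_pos (-(k * y))]
    have he := Real.exp_pos (k * y)
    have : (Real.cosh (k * y) ^ 2)⁻¹ ≤ ((Real.exp (k * y) / 2) ^ 2)⁻¹ := by gcongr
    refine this.trans_eq ?_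
    have : Real.exp (-2 * (k * y)) = (Real.exp (k * y) ^ 2)⁻¹ := by
      rw [← Real.exp_nat_mul, ← Real.exp_neg]
      congr 1
      push_cast
      ring
    rw [this]
    field_simp
    norm_num
  have h2 : phiAux p ω y ≤ (p / 2 * ω * 4) ^ (1 / (p - 2)) * Real.exp (-Real.sqrt ω * y) := by
    have e : Real.exp (-Real.sqrt ω * y) = (Real.exp (-2 * (k * y))) ^ (1 / (p - 2)) := by
      rw [← Real.exp_mul]
      congr 1
      rw [hk]
      field_simp
    rw [e, ← Real.mul_rpow (by positivity) (Real.exp_pos _).le]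
    unfold phiAux
    refine Real.rpow_le_rpow (phiAux_base_pos hp hω _).le ?_ (by positivity)
    rw [mul_assoc (p / 2 * ω)]
    gcongr
  have h4 := pow_le_pow_left₀ (phiAux_pos hp hω y).le h2 2
  refine h4.trans_eq ?_
  rw [mul_pow, ← Real.exp_nat_mul]
  congr 2
  push_cast
  ring

lemma integrable_exp_abs_aux {c : ℝ} (hc : 0 < c) :
    Integrable (fun x : ℝ => Real.exp (-c * |x|)) := by
  rw [← integrableOn_univ, ← Iic_union_Ioi (a := (0 : ℝ))]
  refine IntegrableOn.union ?_ ?_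
  · refine (integrableOn_exp_mul_Iic hc 0).congr_fun ?_ measurableSet_Iic
    intro x hx
    simp only [mem_Iic] at hx
    simp [abs_of_nonpos hx]
  · refine (integrableOn_exp_mul_Ioi (neg_lt_zero.mpr hc) 0).congr_fun ?_ measurableSet_Ioi
    intro x hx
    simp only [mem_Ioi] at hx
    simp [abs_of_pos hx]

theorem stmt18 (p q ω a : ℝ) (hp : 2 < p) (hp' : p ≤ 6) (hq : 2 < q) (hq' : q ≤ 4)
    (hω : 0 < ω) (ha : 0 < a)
    (hA : 2 * Real.tanh ((p - 2) / 2 * Real.sqrt ω * a) =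
      (p / 2) ^ ((q - 2) / (p - 2)) * ω ^ ((q - 2) / (p - 2) - 1 / 2) *
        (1 - Real.tanh ((p - 2) / 2 * Real.sqrt ω * a) ^ 2) ^ ((q - 2) / (p - 2)))
    (u : ℝ → ℝ)
    (hu : u = fun x => ((p / 2) * ω *
      (1 - Real.tanh ((p - 2) / 2 * Real.sqrt ω * (|x| + a)) ^ 2)) ^ (1 / (p - 2))) :
    (∃ u' : ℝ → ℝ, IsH1 u u') ∧
    (∀ x, 0 < u x) ∧
    ContDiffOn ℝ 2 u {(0 : ℝ)}ᶜ ∧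
    (∀ x : ℝ, x ≠ 0 → deriv (deriv u) x + u x ^ (p - 1) = ω * u x) ∧
    (∃ dminus dplus : ℝ,
      HasDerivWithinAt u dminus (Set.Iic 0) 0 ∧
      HasDerivWithinAt u dplus (Set.Ici 0) 0 ∧
      dminus - dplus = u 0 ^ (q - 1)) := by
  have hu2 : u = fun x => phiAux p ω (|x| + a) := hu
  clear hu
  subst hu2
  have hd := fun y => phiAux_hasDerivAt hp hω y
  have hdd := fun y => phiAux_deriv2 hp hω y
  have hpos := fun y => phiAux_pos hp hω y
  have hcd := phiAux_contDiff hp hω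
  have hs : 0 < Real.sqrt ω := Real.sqrt_pos.mpr hω
  set k := (p - 2) / 2 * Real.sqrt ω with hk
  have hR : ∀ x, HasDerivAt (fun x => phiAux p ω (x + a))
      (-Real.sqrt ω * Real.tanh (k * (x + a)) * phiAux p ω (x + a)) x := fun x => by
    simpa using (hd (x + a)).comp_add_const x a
  have hL : ∀ x, HasDerivAt (fun x => phiAux p ω (-x + a))
      (Real.sqrt ω * Real.tanh (k * (-x + a)) * phiAux p ω (-x + a)) x := fun x => by
    have := (hd (-x + a)).comp x ((hasDerivAt_neg x).add_const a)
    refine this.congr_deriv ?_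
    ring
  have hR2 : ∀ x, HasDerivAt
      (fun x => -Real.sqrt ω * Real.tanh (k * (x + a)) * phiAux p ω (x + a))
      (ω * phiAux p ω (x + a) - phiAux p ω (x + a) ^ (p - 1)) x := fun x => by
    simpa using (hdd (x + a)).comp_add_const x a
  have hL2 : ∀ x, HasDerivAt
      (fun x => Real.sqrt ω * Real.tanh (k * (-x + a)) * phiAux p ω (-x + a))
      (ω * phiAux p ω (-x + a) - phiAux p ω (-x + a) ^ (p - 1)) x := fun x => by
    have := ((hdd (-x + a)).comp x ((hasDerivAt_neg x).add_const a)).neg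
    refine (this.congr_deriv (by ring)).congr_of_eventuallyEq ?_
    refine Filter.Eventually.of_forall fun y => ?_
    simp [Function.comp]
  have huR : ∀ x, 0 < x → HasDerivAt (fun x => phiAux p ω (|x| + a))
      (-Real.sqrt ω * Real.tanh (k * (x + a)) * phiAux p ω (x + a)) x := fun x hx => by
    refine (hR x).congr_of_eventuallyEq ?_
    filter_upwards [lt_mem_nhds hx] with y hy
    rw [abs_of_pos hy]
  have huL : ∀ x, x < 0 → HasDerivAt (fun x => phiAux p ω (|x| + a))
      (Real.sqrt ω * Real.tanh (k * (-x + a)) * phiAux p ω (-x + a)) x := fun x hx => by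
    refine (hL x).congr_of_eventuallyEq ?_
    filter_upwards [gt_mem_nhds hx] with y hy
    rw [abs_of_neg hy]
  have hcu : Continuous (fun x => phiAux p ω (|x| + a)) :=
    hcd.continuous.comp (continuous_abs.add continuous_const)
  have hsqInt : Integrable (fun x => (phiAux p ω (|x| + a)) ^ 2) := by
    have hg := ((integrable_exp_abs_aux (c := 2 * Real.sqrt ω) (by positivity)).mul_const
      (Real.exp (-(2 * Real.sqrt ω) * a))).const_mul (((p / 2 * ω * 4) ^ (1 / (p - 2))) ^ 2)
    refine hg.mono' (hcu.pow 2).aestronglyMeasurable (Filter.Eventually.of_forall fun x => ?_)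
    rw [Real.norm_of_nonneg (by positivity), ← Real.exp_add, ← mul_add]
    exact phiAux_sq_le hp hω _
  refine ⟨?_, fun x => hpos _, ?_, ?_, ?_⟩
  ·
    set v : ℝ → ℝ := fun x => if x < 0 then
      Real.sqrt ω * Real.tanh (k * (|x| + a)) * phiAux p ω (|x| + a) else
      -Real.sqrt ω * Real.tanh (k * (|x| + a)) * phiAux p ω (|x| + a) with hv
    have hct : Continuous Real.tanh := (tanh_contDiff_aux (n := 0)).continuous
    have hvm : Measurable v := by
      refine Measurable.ite measurableSet_Iio ?_ ?_ <;>
      · apply Continuous.measurable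
        fun_prop
    have hvle : ∀ x, |v x| ≤ Real.sqrt ω * phiAux p ω (|x| + a) := by
      intro x
      have ht : |Real.tanh (k * (|x| + a))| ≤ 1 := by
        have := tanh_aux_pos (k * (|x| + a))
        rw [abs_le_one_iff_mul_self_le_one]
        nlinarith
      have e : |v x| = Real.sqrt ω * |Real.tanh (k * (|x| + a))| * phiAux p ω (|x| + a) := by
        simp only [hv]
        split_ifs <;> simp [abs_mul, abs_of_pos hs, abs_of_pos (hpos _)]
      rw [e]
      have := hpos (|x| + a)
      have h5 : Real.sqrt ω * |Real.tanh (k * (|x| + a))| ≤ Real.sqrt ω :=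
        mul_le_of_le_one_right hs.le ht
      gcongr
    refine ⟨v, hcu, hsqInt, ?_, ?_⟩
    · refine (hsqInt.const_mul ω).mono' (hvm.pow_const 2).aestronglyMeasurable
        (Filter.Eventually.of_forall fun x => ?_)
      rw [Real.norm_of_nonneg (by positivity), ← sq_abs]
      refine (pow_le_pow_left₀ (abs_nonneg _) (hvle x) 2).trans_eq ?_
      rw [mul_pow, Real.sq_sqrt hω.le]
    · intro b c hbc
      symm
      refine integral_eq_of_hasDerivAt_off_countable_of_le _ v hbc (countable_singleton 0)
        hcu.continuousOn ?_ ?_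
      · rintro x ⟨-, hx⟩
        rcases lt_or_gt_of_ne (show x ≠ 0 from hx) with h | h
        · have := huL x h
          simpa only [hv, if_pos h, abs_of_neg h] using this
        · have := huR x h
          simpa only [hv, if_neg h.not_gt, abs_of_pos h] using this
      · refine IntervalIntegrable.mono_fun' (g := fun x => Real.sqrt ω * phiAux p ω (|x| + a))
          ((continuous_const.mul hcu).intervalIntegrable _ _) hvm.aestronglyMeasurable
          (Filter.Eventually.of_forall fun x => hvle x)
  · intro x hx
    have h := (contDiffAt_abs (n := 2) (show x ≠ 0 from hx)).add
      (contDiffAt_const (c := a))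
    exact (hcd.contDiffAt.comp x h).contDiffWithinAt
  · intro x hx
    rcases lt_or_gt_of_ne hx with h | h
    · have : deriv (fun x => phiAux p ω (|x| + a)) =ᶠ[nhds x]
          (fun x => Real.sqrt ω * Real.tanh (k * (-x + a)) * phiAux p ω (-x + a)) := by
        filter_upwards [gt_mem_nhds h] with y hy
        exact (huL y hy).deriv
      rw [this.deriv_eq, (hL2 x).deriv]
      simp only [abs_of_neg h]
      ring
    · have : deriv (fun x => phiAux p ω (|x| + a)) =ᶠ[nhds x]
          (fun x => -Real.sqrt ω * Real.tanh (k * (x + a)) * phiAux p ω (x + a)) := by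
        filter_upwards [lt_mem_nhds h] with y hy
        exact (huR y hy).deriv
      rw [this.deriv_eq, (hR2 x).deriv]
      simp only [abs_of_pos h]
      ring
  · refine ⟨_, _, (hL 0).hasDerivWithinAt.congr ?_ ?_, (hR 0).hasDerivWithinAt.congr ?_ ?_, ?_⟩
    · intro y hy
      rw [abs_of_nonpos hy]
    · simp
    · intro y hy
      rw [abs_of_nonneg hy]
    · simp
    · have hb := phiAux_base_pos hp hω (k * a)
      have ht := tanh_aux_pos (k * a)
      have hp0 : 0 < p / 2 := by linarith
      have hq1 : q - 1 = 1 + (q - 2) := by ring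
      have e : phiAux p ω a ^ (q - 2) = 2 * Real.sqrt ω * Real.tanh (k * a) := by
        have : 2 * Real.sqrt ω * Real.tanh (k * a) = Real.sqrt ω * (2 * Real.tanh (k * a)) := by
          ring
        rw [this, hA]
        unfold phiAux
        rw [← hk, ← Real.rpow_mul hb.le, Real.mul_rpow (by positivity) ht.le,
          Real.mul_rpow hp0.le hω.le, Real.rpow_sub hω, ← Real.sqrt_eq_rpow]
        have : 1 / (p - 2) * (q - 2) = (q - 2) / (p - 2) := by ring
        rw [this]
        field_simp
      simp only [abs_zero, zero_add, neg_zero]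
      rw [hq1, Real.rpow_add (hpos a), Real.rpow_one, e]
      ring
end
end

section
/- Let 0 < μ₁ < μ₂. If there exists u ∈ H¹(ℝ) with ‖u‖₂² = μ₁ and F_{6,4}(u) < 0, then there exists v ∈ H¹(ℝ) with ‖v‖₂² = μ₂ and F_{6,4}(v) < 0. In particular, if F_{6,4}(w) ≥ 0 for every w ∈ H¹(ℝ) with ‖w‖₂² = μ₂, then F_{6,4}(w) ≥ 0 for every w ∈ H¹(ℝ) with ‖w‖₂² = μ₁. -/
open MeasureTheory Real Set

noncomputable section

theorem scale_aux (μ₁ μ₂ : ℝ) (h1 : 0 < μ₁) (h12 : μ₁ < μ₂)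
    (h : ∃ u u' : ℝ → ℝ, IsH1 u u' ∧ mass u = μ₁ ∧ Ffun 6 4 u u' < 0) :
    ∃ v v' : ℝ → ℝ, IsH1 v v' ∧ mass v = μ₂ ∧ Ffun 6 4 v v' < 0 := by
  obtain ⟨u, u', ⟨hc, hi, hi', hw⟩, hm, hF⟩ := h
  have ht1 : 1 < μ₂ / μ₁ := by rwa [one_lt_div h1]
  have htm : μ₂ / μ₁ * μ₁ = μ₂ := div_mul_cancel₀ _ h1.ne'
  generalize μ₂ / μ₁ = t at ht1 htm
  obtain ⟨s, hs0, hs⟩ : ∃ s : ℝ, 0 ≤ s ∧ s ^ 2 = t :=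
    ⟨Real.sqrt t, Real.sqrt_nonneg t, Real.sq_sqrt (by linarith)⟩
  refine ⟨fun x => s * u x, fun x => s * u' x, ⟨by fun_prop, ?_, ?_, ?_⟩, ?_, ?_⟩
  · simpa only [mul_pow] using hi.const_mul (s ^ 2)
  · simpa only [mul_pow] using hi'.const_mul (s ^ 2)
  · intro a b hab
    rw [intervalIntegral.integral_const_mul, ← hw a b hab]
    ring
  · unfold mass at hm ⊢
    simp only [mul_pow]
    rw [integral_const_mul, hm, hs, htm]
  · unfold Ffun at hF ⊢
    have e6 : ∀ x : ℝ, |x| ^ (6 : ℝ) = |x| ^ 6 := fun x => by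
      exact_mod_cast Real.rpow_natCast |x| 6
    have e4 : ∀ x : ℝ, |x| ^ (4 : ℝ) = |x| ^ 4 := fun x => by
      exact_mod_cast Real.rpow_natCast |x| 4
    simp only [e6, e4] at hF ⊢
    simp only [abs_mul, mul_pow, abs_of_nonneg hs0]
    rw [integral_const_mul, integral_const_mul]
    have hB : 0 ≤ ∫ x, |u x| ^ 6 := integral_nonneg fun x => by positivity
    have hC : 0 ≤ |u 0| ^ 4 := by positivity
    have s6 : s ^ 6 = t ^ 3 := by rw [← hs]; ring
    have s4 : s ^ 4 = t ^ 2 := by rw [← hs]; ring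
    rw [s6, s4, hs]
    generalize (∫ x, |u x| ^ 6) = B at *
    generalize |u 0| ^ 4 = C at *
    generalize (∫ x, (u' x) ^ 2) = A at *
    have k2 : t ≤ t ^ 2 := by nlinarith
    have k3 : t ≤ t ^ 3 := by nlinarith
    have hb := mul_le_mul_of_nonneg_right k3 hB
    have hcc := mul_le_mul_of_nonneg_right k2 hC
    have := mul_neg_of_pos_of_neg (by linarith : (0 : ℝ) < t) hF
    linarith

theorem stmt19 (μ₁ μ₂ : ℝ) (h1 : 0 < μ₁) (h12 : μ₁ < μ₂) :
    ((∃ u u' : ℝ → ℝ, IsH1 u u' ∧ mass u = μ₁ ∧ Ffun 6 4 u u' < 0) →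
      ∃ v v' : ℝ → ℝ, IsH1 v v' ∧ mass v = μ₂ ∧ Ffun 6 4 v v' < 0) ∧
    ((∀ w w' : ℝ → ℝ, IsH1 w w' → mass w = μ₂ → 0 ≤ Ffun 6 4 w w') →
      ∀ w w' : ℝ → ℝ, IsH1 w w' → mass w = μ₁ → 0 ≤ Ffun 6 4 w w') := by
  refine ⟨scale_aux μ₁ μ₂ h1 h12, fun H w w' hw hm => ?_⟩
  by_contra hneg
  obtain ⟨v, v', hv, hvm, hvF⟩ := scale_aux μ₁ μ₂ h1 h12 ⟨w, w', hw, hm, not_le.mp hneg⟩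
  exact absurd (H v v' hv hvm) (not_le.mpr hvF)
end
end
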